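/- For every integer n ≥ 1, with R = W(n+1), one has |B_n/E_n − (1 − (e^{−R}/12)·(1 − 3/(2R) − 10/R² − 9/R³ + 1/R⁴)/(1 + 1/R)³)| ≤ 1.6·e^{−2R}. -/

import Mathlib

/-- Principal branch of the Lambert W function on `[0, ∞)`: for `x ≥ 0`,
`lambertW x` is the unique `y ≥ 0` with `y * exp y = x`. -/
noncomputable def lambertW (x : ℝ) : ℝ := Function.invFun (fun y : ℝ => y * Real.exp y) x

/-- Bell numbers: `Bell 0 = 1` and `Bell (n+1) = ∑_{k=0}^{n} C(n,k) * Bell k`. -/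
def Bell : ℕ → ℕ
  | 0 => 1
  | n + 1 => ∑ k ∈ (Finset.range (n + 1)).attach, (n.choose k.1) * Bell k.1
decreasing_by exact Finset.mem_range.mp k.2

/-- `E n = n! * exp(e^R - 1) / (R^n * sqrt(2π(n+1)(R+1)))` with `R = W(n+1)`. -/
noncomputable def E (n : ℕ) : ℝ :=
  (Nat.factorial n : ℝ) * Real.exp (Real.exp (lambertW (n + 1)) - 1) /
    ((lambertW (n + 1)) ^ n * Real.sqrt (2 * Real.pi * (n + 1) * (lambertW (n + 1) + 1)))

/-!
Dobiński's formula and Fourier inversion of the Gamma density, applied term by term, write `Bell n`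
as the integral of `exp (exp z) / z ^ (n + 1)` over a vertical line. The line `re z = R` with
`R = lambertW (n + 1)` passes through the saddle point, and there `Bell n / E n` is exactly a
normalised integral of a Gaussian of curvature `t * (1 + 1 / R)`, `t = exp R`, times
`exp (t * phaseRe R y) * cos (t * phaseIm R y)`. The quartic term of `phaseRe` and the square of
the cubic term of `phaseIm` produce the correction of order `1 / t`; the remaining Taylor terms for
`y ^ 2 ≤ 2`, and the exponentially small tail, contribute at most `1.6 / t ^ 2` once `11 / 5 ≤ R`,
which covers `19 ≤ n`. For `n ≤ 18` the bound follows from a rational enclosure of `R`.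
-/

open MeasureTheory Filter Topology Set Real FourierTransform
open Complex (I)
open scoped Nat

/-! ### Dobiński's formula -/

lemma Bell_succ (n : ℕ) : Bell (n + 1) = ∑ k ∈ Finset.range (n + 1), n.choose k * Bell k := by
  rw [Bell]
  exact Finset.sum_attach (Finset.range (n + 1)) (fun k ↦ n.choose k * Bell k)

lemma succ_pow_succ_div_factorial_succ (n k : ℕ) :
    ((k + 1 : ℕ) : ℝ) ^ (n + 1) / ((k + 1)! : ℝ) =
      ∑ j ∈ Finset.range (n + 1), (n.choose j : ℝ) * ((k : ℝ) ^ j / (k ! : ℝ)) := by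
  have hk : (k : ℝ) + 1 ≠ 0 := by positivity
  have cancel : ((k + 1 : ℕ) : ℝ) ^ (n + 1) / ((k + 1)! : ℝ) = ((k : ℝ) + 1) ^ n / k ! := by
    rw [Nat.factorial_succ]
    push_cast
    field_simp
    ring
  rw [cancel, add_pow, Finset.sum_div]
  refine Finset.sum_congr rfl fun j _ ↦ ?_
  rw [one_pow]
  ring

theorem hasSum_pow_div_factorial (n : ℕ) :
    HasSum (fun k : ℕ ↦ (k : ℝ) ^ n / (k ! : ℝ)) (exp 1 * Bell n) := by
  induction n using Nat.strong_induction_on with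
  | _ n ih =>
    rcases n with _ | n
    · simpa [Bell, ← exp_eq_exp_ℝ] using NormedSpace.expSeries_div_hasSum_exp (𝔸 := ℝ) 1
    · have binomial_sum := hasSum_sum fun j hj ↦
        (ih j (Finset.mem_range.1 hj)).mul_left (n.choose j : ℝ)
      simp only [← succ_pow_succ_div_factorial_succ] at binomial_sum
      rw [← hasSum_nat_add_iff' 1]
      convert! binomial_sum using 1
      rw [Bell_succ, Finset.sum_range_one, Nat.cast_zero, zero_pow n.succ_ne_zero, zero_div,
        sub_zero]
      push_cast
      rw [Finset.mul_sum]
      exact Finset.sum_congr rfl fun j _ ↦ by ring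

/-! ### The Laplace transform of a power and its inversion -/

section Laplace

variable {s : ℂ}

lemma norm_pow_mul_cexp_neg_mul (s : ℂ) (m : ℕ) {t : ℝ} (ht : 0 < t) :
    ‖(t : ℂ) ^ m * Complex.exp (-(s * t))‖ = t ^ m * exp (-(s.re * t)) := by
  simp [Complex.norm_exp, abs_of_pos ht]

lemma integrableOn_pow_mul_exp_neg_mul {r : ℝ} (hr : 0 < r) (m : ℕ) :
    IntegrableOn (fun t : ℝ ↦ t ^ m * exp (-(r * t))) (Ioi 0) := by
  have hm : (-1 : ℝ) < m := by linarith [(m.cast_nonneg : (0 : ℝ) ≤ m)]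
  simpa using integrableOn_rpow_mul_exp_neg_mul_rpow hm one_pos hr

lemma integrableOn_pow_mul_cexp_neg_mul (hs : 0 < s.re) (m : ℕ) :
    IntegrableOn (fun t : ℝ ↦ (t : ℂ) ^ m * Complex.exp (-(s * t))) (Ioi 0) := by
  refine (integrableOn_pow_mul_exp_neg_mul hs m).mono'
    (Continuous.aestronglyMeasurable (by fun_prop)) ?_
  filter_upwards [ae_restrict_mem measurableSet_Ioi] with t ht
  exact (norm_pow_mul_cexp_neg_mul s m ht).le

lemma tendsto_pow_mul_cexp_neg_mul_atTop (hs : 0 < s.re) (m : ℕ) :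
    Tendsto (fun t : ℝ ↦ (t : ℂ) ^ m * Complex.exp (-(s * t))) atTop (𝓝 0) := by
  rw [tendsto_zero_iff_norm_tendsto_zero]
  refine (tendsto_rpow_mul_exp_neg_mul_atTop_nhds_zero m s.re hs).congr' ?_
  filter_upwards [eventually_gt_atTop 0] with t ht
  rw [norm_pow_mul_cexp_neg_mul s m ht, rpow_natCast, neg_mul]

lemma hasDerivAt_pow_succ_mul_cexp_neg_mul (s : ℂ) (m : ℕ) (t : ℝ) :
    HasDerivAt (fun t : ℝ ↦ (t : ℂ) ^ (m + 1) * Complex.exp (-(s * t)))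
      ((m + 1) * ((t : ℂ) ^ m * Complex.exp (-(s * t)))
        - s * ((t : ℂ) ^ (m + 1) * Complex.exp (-(s * t)))) t := by
  have hpow := ((hasDerivAt_id (t : ℂ)).pow (m + 1)).comp_ofReal
  have hexp := (((hasDerivAt_id (t : ℂ)).const_mul s).neg.cexp).comp_ofReal
  convert! hpow.mul hexp using 1
  simp only [Nat.cast_add, Nat.cast_one, id_eq, add_tsub_cancel_right, mul_one, Pi.neg_apply,
    Pi.pow_apply, mul_neg]
  ring

theorem integral_pow_mul_cexp_neg_mul_Ioi (hs : 0 < s.re) (n : ℕ) :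
    ∫ t in Ioi (0 : ℝ), (t : ℂ) ^ n * Complex.exp (-(s * t)) = n ! / s ^ (n + 1) := by
  have hs0 : s ≠ 0 := by rintro rfl; simp at hs
  induction n with
  | zero =>
    have h := integral_exp_mul_complex_Ioi (a := -s) (by simpa using hs) 0
    simpa [neg_mul] using h
  | succ n ih =>
    have intN := (integrableOn_pow_mul_cexp_neg_mul hs n).const_mul ((n : ℂ) + 1)
    have intS := (integrableOn_pow_mul_cexp_neg_mul hs (n + 1)).const_mul s
    have by_parts := integral_Ioi_of_hasDerivAt_of_tendsto' (a := 0)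
      (fun t _ ↦ hasDerivAt_pow_succ_mul_cexp_neg_mul s n t) (intN.sub intS)
      (tendsto_pow_mul_cexp_neg_mul_atTop hs (n + 1))
    rw [integral_sub intN intS, integral_const_mul, integral_const_mul, ih, Complex.ofReal_zero,
      zero_pow n.succ_ne_zero, zero_mul, sub_zero, sub_eq_zero] at by_parts
    rw [← mul_right_inj' hs0, ← by_parts, Nat.factorial_succ]
    push_cast
    field_simp
    ring

end Laplace

section VerticalLine

variable {R : ℝ} {n : ℕ}

lemma add_mul_I_ne_zero (hR : R ≠ 0) (y : ℝ) : (R : ℂ) + y * I ≠ 0 := fun h ↦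
  hR (by simpa using congrArg Complex.re h)

lemma abs_le_norm_add_mul_I (R y : ℝ) : |R| ≤ ‖(R : ℂ) + y * I‖ := by
  simpa using Complex.abs_re_le_norm ((R : ℂ) + y * I)

lemma integrable_inv_add_mul_I_pow (hR : R ≠ 0) (hn : 1 ≤ n) :
    Integrable (fun y : ℝ ↦ ((R : ℂ) + y * I)⁻¹ ^ (n + 1)) := by
  have majorant : Integrable (fun y : ℝ ↦ |R|⁻¹ ^ (n + 1) * (1 + (R⁻¹ * y) ^ 2)⁻¹) :=
    (integrable_inv_one_add_sq.comp_mul_left' (inv_ne_zero hR)).const_mul _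
  refine majorant.mono' (((Continuous.inv₀ (by fun_prop)
    (add_mul_I_ne_zero hR)).pow _).aestronglyMeasurable) (Eventually.of_forall fun y ↦ ?_)
  have normSq : ‖(R : ℂ) + y * I‖ ^ 2 = R ^ 2 * (1 + (R⁻¹ * y) ^ 2) := by
    rw [← Complex.normSq_eq_norm_sq, Complex.normSq_add_mul_I]
    field_simp
  obtain ⟨m, rfl⟩ := Nat.exists_eq_add_of_le' hn
  calc ‖((R : ℂ) + y * I)⁻¹ ^ (m + 1 + 1)‖
      = ‖(R : ℂ) + y * I‖⁻¹ ^ m * (‖(R : ℂ) + y * I‖ ^ 2)⁻¹ := by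
        rw [norm_pow, norm_inv]
        ring
    _ ≤ |R|⁻¹ ^ m * (‖(R : ℂ) + y * I‖ ^ 2)⁻¹ := by
        gcongr
        exact abs_le_norm_add_mul_I R y
    _ = |R|⁻¹ ^ (m + 1 + 1) * (1 + (R⁻¹ * y) ^ 2)⁻¹ := by
        rw [normSq, mul_inv, ← sq_abs R]
        ring

/-- The unnormalised Gamma density `t ^ n * exp (-R t)` on `t > 0`, extended by zero and viewed
as complex valued. Its Fourier transform is `n! / (R + 2π i w) ^ (n + 1)`. -/
noncomputable def gammaDensity (n : ℕ) (R t : ℝ) : ℂ := ((max t 0 ^ n * exp (-(R * t)) : ℝ) : ℂ)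

lemma gammaDensity_eq_indicator (hn : 1 ≤ n) (R : ℝ) :
    gammaDensity n R =
      (Ioi (0 : ℝ)).indicator fun t ↦ (t : ℂ) ^ n * Complex.exp (-((R : ℂ) * t)) := by
  ext t
  rcases lt_or_ge 0 t with ht | ht
  · simp [gammaDensity, ht, max_eq_left ht.le]
  · simp [gammaDensity, ht.not_gt, max_eq_right ht, Nat.one_le_iff_ne_zero.mp hn]

lemma continuous_gammaDensity (n : ℕ) (R : ℝ) : Continuous (gammaDensity n R) := by
  unfold gammaDensity
  fun_prop

lemma integrable_gammaDensity (hR : 0 < R) (hn : 1 ≤ n) : Integrable (gammaDensity n R) := by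
  rw [gammaDensity_eq_indicator hn, integrable_indicator_iff measurableSet_Ioi]
  exact integrableOn_pow_mul_cexp_neg_mul (by simpa using hR) n

lemma fourier_gammaDensity (hR : 0 < R) (hn : 1 ≤ n) (w : ℝ) :
    𝓕 (gammaDensity n R) w = n ! * ((R : ℂ) + ((2 * π * w : ℝ) : ℂ) * I)⁻¹ ^ (n + 1) := by
  have hs : 0 < ((R : ℂ) + ((2 * π * w : ℝ) : ℂ) * I).re := by simpa using hR
  rw [inv_pow, ← div_eq_mul_inv, ← integral_pow_mul_cexp_neg_mul_Ioi hs,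
    fourier_real_eq_integral_exp_smul, gammaDensity_eq_indicator hn,
    ← integral_indicator measurableSet_Ioi]
  congr 1 with t
  rcases lt_or_ge 0 t with ht | ht
  · simp only [mem_Ioi, ht, indicator_of_mem, smul_eq_mul]
    rw [mul_left_comm, ← Complex.exp_add]
    congr 2
    push_cast
    ring
  · simp [ht.not_gt]

lemma integrable_fourier_gammaDensity (hR : 0 < R) (hn : 1 ≤ n) :
    Integrable (𝓕 (gammaDensity n R)) := by
  rw [funext (fourier_gammaDensity hR hn)]
  exact ((integrable_inv_add_mul_I_pow hR.ne' hn).comp_mul_left' (by positivity)).const_mul _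

theorem integral_cexp_mul_inv_add_mul_I_pow (hR : 0 < R) (hn : 1 ≤ n) (v : ℝ) :
    ∫ y : ℝ, Complex.exp (v * (y * I)) * ((R : ℂ) + y * I)⁻¹ ^ (n + 1) =
      2 * π / n ! * gammaDensity n R v := by
  set g : ℝ → ℂ := fun y ↦ Complex.exp (v * (y * I)) * ((R : ℂ) + y * I)⁻¹ ^ (n + 1) with hg
  have inversion : gammaDensity n R v = n ! * ∫ w : ℝ, g (2 * π * w) := by
    rw [← (integrable_gammaDensity hR hn).fourierInv_fourier_eq
      (integrable_fourier_gammaDensity hR hn) (continuous_gammaDensity n R).continuousAt,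
      fourierInv_eq', ← integral_const_mul]
    congr 1 with w
    rw [fourier_gammaDensity hR hn, smul_eq_mul, mul_left_comm, hg]
    congr 2
    simp only [RCLike.inner_apply, ringHom_apply, Complex.ofReal_mul, Complex.ofReal_ofNat]
    ring_nf
  rw [inversion, Measure.integral_comp_mul_left, abs_of_pos (by positivity), Complex.real_smul]
  have hfact : (n ! : ℂ) ≠ 0 := by exact_mod_cast n.factorial_ne_zero
  have hpi : (π : ℂ) ≠ 0 := by exact_mod_cast pi_ne_zero
  push_cast
  field_simp

/-! ### Bell numbers as integrals along vertical lines -/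

/-- The `k`-th term of the expansion of `exp (exp z) / z ^ (n + 1)` in powers of `exp z`. -/
noncomputable def expExpTerm (n k : ℕ) (z : ℂ) : ℂ := Complex.exp (k * z) / k ! * z⁻¹ ^ (n + 1)

lemma hasSum_expExpTerm (n : ℕ) (z : ℂ) :
    HasSum (fun k ↦ expExpTerm n k z) (Complex.exp (Complex.exp z) * z⁻¹ ^ (n + 1)) := by
  have h := NormedSpace.expSeries_div_hasSum_exp (𝔸 := ℂ) (Complex.exp z)
  simp only [← Complex.exp_eq_exp_ℂ, ← Complex.exp_nat_mul] at h
  exact h.mul_right _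

lemma norm_expExpTerm (n k : ℕ) (z : ℂ) :
    ‖expExpTerm n k z‖ = exp z.re ^ k / k ! * ‖z⁻¹ ^ (n + 1)‖ := by
  simp [expExpTerm, Complex.norm_exp, ← exp_nat_mul]

lemma integrable_expExpTerm (hR : R ≠ 0) (hn : 1 ≤ n) (k : ℕ) :
    Integrable (fun y : ℝ ↦ expExpTerm n k (R + y * I)) := by
  have hi := integrable_inv_add_mul_I_pow hR hn
  refine (hi.norm.const_mul (exp R ^ k / k !)).mono'
    ((Continuous.aestronglyMeasurable (by fun_prop)).mul hi.1)
    (Eventually.of_forall fun y ↦ ?_)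
  simp [norm_expExpTerm]

lemma integral_expExpTerm (hR : 0 < R) (hn : 1 ≤ n) (k : ℕ) :
    ∫ y : ℝ, expExpTerm n k (R + y * I) = ((2 * π / n ! * ((k : ℝ) ^ n / k !) : ℝ) : ℂ) := by
  have factor (y : ℝ) : expExpTerm n k (R + y * I) = Complex.exp (k * R) / k ! *
      (Complex.exp ((k : ℝ) * (y * I)) * ((R : ℂ) + y * I)⁻¹ ^ (n + 1)) := by
    rw [expExpTerm, mul_add, Complex.exp_add]
    push_cast
    ring
  have cancel : Complex.exp (k * R) * Complex.exp (-(R * k)) = 1 := by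
    rw [← Complex.exp_add, mul_comm, add_neg_cancel, Complex.exp_zero]
  simp only [factor]
  rw [integral_const_mul, integral_cexp_mul_inv_add_mul_I_pow hR hn, gammaDensity,
    max_eq_left k.cast_nonneg]
  push_cast
  linear_combination (2 * π / n ! * (k : ℂ) ^ n / k !) * cancel

theorem integral_cexp_cexp_mul_inv_add_mul_I_pow (hR : 0 < R) (hn : 1 ≤ n) :
    ∫ y : ℝ, Complex.exp (Complex.exp (R + y * I)) * ((R : ℂ) + y * I)⁻¹ ^ (n + 1) =
      ((2 * π / n ! * (exp 1 * Bell n) : ℝ) : ℂ) := by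
  have summable_norm : Summable fun k ↦ ∫ y : ℝ, ‖expExpTerm n k (R + y * I)‖ := by
    simp only [norm_expExpTerm, integral_const_mul, Complex.add_re, Complex.ofReal_re,
      Complex.re_ofReal_mul, Complex.I_re, mul_zero, add_zero]
    exact (summable_pow_div_factorial _).mul_right _
  have termwise := hasSum_integral_of_summable_integral_norm
    (integrable_expExpTerm hR.ne' hn) summable_norm
  simp only [(hasSum_expExpTerm n _).tsum_eq, integral_expExpTerm hR hn] at termwise
  exact termwise.unique (Complex.hasSum_ofReal.mpr ((hasSum_pow_div_factorial n).mul_left _))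

lemma integrable_cexp_cexp_mul_inv_add_mul_I_pow (hR : R ≠ 0) (hn : 1 ≤ n) :
    Integrable (fun y : ℝ ↦
      Complex.exp (Complex.exp (R + y * I)) * ((R : ℂ) + y * I)⁻¹ ^ (n + 1)) := by
  have hi := integrable_inv_add_mul_I_pow hR hn
  refine (hi.norm.const_mul (exp (exp R))).mono'
    ((Continuous.aestronglyMeasurable (by fun_prop)).mul hi.1) (Eventually.of_forall fun y ↦ ?_)
  rw [norm_mul, Complex.norm_exp]
  gcongr
  exact (Complex.re_le_norm _).trans (by simp [Complex.norm_exp])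

end VerticalLine

/-! ### The saddle-point form of `Bell n / E n` -/

/-- With `z = R + i y`, the real part of `exp (i y) - R log (z / R)` is
`1 - (1 + 1 / R) y² / 2 + phaseRe R y`: this is its remainder after the quadratic term. -/
noncomputable def phaseRe (R y : ℝ) : ℝ :=
  (cos y - 1 + y ^ 2 / 2) + R / 2 * ((y / R) ^ 2 - log (1 + (y / R) ^ 2))

/-- With `z = R + i y`, the imaginary part of `exp (i y) - R log (z / R)`, whose linear term
vanishes. -/
noncomputable def phaseIm (R y : ℝ) : ℝ := sin y - R * arctan (y / R)

/-- The real part of `exp (t (exp (i y) - 1 - R log (1 + i y / R)))`, with the Gaussian factor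
split off; `t` is the large parameter of the saddle-point method. -/
noncomputable def saddleIntegrand (t R y : ℝ) : ℝ :=
  exp (-(t * (1 + 1 / R) * y ^ 2 / 2)) * (exp (t * phaseRe R y) * cos (t * phaseIm R y))

lemma one_add_mul_I_eq_cexp (x : ℝ) :
    (1 : ℂ) + x * I = Complex.exp ((1 / 2 * log (1 + x ^ 2) : ℝ) + (arctan x : ℝ) * I) := by
  have hpos : 0 < 1 + x ^ 2 := by positivity
  have hsqrt : ((√(1 + x ^ 2) : ℝ) : ℂ) ≠ 0 := by exact_mod_cast (sqrt_pos.2 hpos).ne'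
  have hexp : exp (1 / 2 * log (1 + x ^ 2)) = √(1 + x ^ 2) := by
    rw [sqrt_eq_rpow, rpow_def_of_pos hpos, mul_comm]
  rw [Complex.exp_add, ← Complex.ofReal_exp, hexp, Complex.exp_mul_I, ← Complex.ofReal_cos,
    ← Complex.ofReal_sin, cos_arctan, sin_arctan]
  push_cast
  field_simp

section SaddlePoint

variable {R : ℝ}

lemma inv_add_mul_I_pow_eq_cexp (hR : R ≠ 0) (N : ℕ) (y : ℝ) :
    ((R : ℂ) + y * I)⁻¹ ^ N = ((R⁻¹ ^ N : ℝ) : ℂ) * Complex.exp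
      (-(N * ((1 / 2 * log (1 + (y / R) ^ 2) : ℝ) + (arctan (y / R) : ℝ) * I))) := by
  have hRc : (R : ℂ) ≠ 0 := by exact_mod_cast hR
  have polar : (R : ℂ) + y * I = R * Complex.exp
      ((1 / 2 * log (1 + (y / R) ^ 2) : ℝ) + (arctan (y / R) : ℝ) * I) := by
    rw [← one_add_mul_I_eq_cexp]
    push_cast
    field_simp
  rw [polar, mul_inv, mul_pow, ← Complex.exp_neg, ← Complex.exp_nat_mul, mul_neg]
  push_cast
  rfl

lemma phase_eq {t : ℝ} (hR : R ≠ 0) {N : ℕ} (hN : t * R = N) (y : ℝ) :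
    (t : ℂ) * Complex.exp (y * I) +
        -(N * ((1 / 2 * log (1 + (y / R) ^ 2) : ℝ) + (arctan (y / R) : ℝ) * I)) =
      ((t + -(t * (1 + 1 / R) * y ^ 2 / 2) + t * phaseRe R y : ℝ) : ℂ)
        + ((t * phaseIm R y : ℝ) : ℂ) * I := by
  have re_eq : t + -(t * (1 + 1 / R) * y ^ 2 / 2) + t * phaseRe R y =
      t * cos y - t * R * (1 / 2 * log (1 + (y / R) ^ 2)) := by
    unfold phaseRe
    field_simp
    ring
  have hNc : (N : ℂ) = t * R := by exact_mod_cast hN.symm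
  rw [re_eq, hNc, Complex.exp_mul_I, phaseIm]
  push_cast
  ring

lemma re_cexp_mul_inv_add_mul_I_pow {t : ℝ} (hR : R ≠ 0) {N : ℕ} (hN : t * R = N) (y : ℝ) :
    (Complex.exp (t * Complex.exp (y * I)) * ((R : ℂ) + y * I)⁻¹ ^ N).re =
      exp t * R⁻¹ ^ N * saddleIntegrand t R y := by
  rw [inv_add_mul_I_pow_eq_cexp hR, mul_left_comm, ← Complex.exp_add, Complex.re_ofReal_mul,
    phase_eq hR hN, ← Complex.mk_eq_add_mul_I, Complex.exp_re, exp_add, exp_add, saddleIntegrand]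
  ring

variable {n : ℕ}

lemma re_cexp_cexp_mul_inv_add_mul_I_pow (hR : 0 < R) (hN : exp R * R = n + 1) (y : ℝ) :
    (Complex.exp (Complex.exp (R + y * I)) * ((R : ℂ) + y * I)⁻¹ ^ (n + 1)).re =
      exp (exp R) * R⁻¹ ^ (n + 1) * saddleIntegrand (exp R) R y := by
  rw [Complex.exp_add, ← Complex.ofReal_exp]
  exact re_cexp_mul_inv_add_mul_I_pow hR.ne' (by exact_mod_cast hN) y

lemma integrable_saddleIntegrand (hR : 0 < R) (hn : 1 ≤ n) (hN : exp R * R = n + 1) :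
    Integrable (saddleIntegrand (exp R) R) := by
  have hre := (integrable_cexp_cexp_mul_inv_add_mul_I_pow hR.ne' hn).re
  rw [funext fun y : ℝ ↦
    show RCLike.re _ = _ from re_cexp_cexp_mul_inv_add_mul_I_pow hR hN y] at hre
  exact (integrable_const_mul_iff (IsUnit.mk0 _ (by positivity)) _).1 hre

lemma Bell_eq_integral_saddleIntegrand (hR : 0 < R) (hn : 1 ≤ n) (hN : exp R * R = n + 1) :
    (Bell n : ℝ) = n ! * (exp (exp R) * R⁻¹ ^ (n + 1)) / (2 * π * exp 1) *
      ∫ y, saddleIntegrand (exp R) R y := by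
  have hre := integral_re (integrable_cexp_cexp_mul_inv_add_mul_I_pow hR.ne' hn)
  rw [integral_cexp_cexp_mul_inv_add_mul_I_pow hR hn, RCLike.re_eq_complex_re,
    Complex.ofReal_re] at hre
  simp only [re_cexp_cexp_mul_inv_add_mul_I_pow hR hN,
    integral_const_mul] at hre
  rw [div_mul_eq_mul_div, mul_assoc (n ! : ℝ), hre]
  field_simp

lemma E_eq (hR : R = lambertW (n + 1)) (hpos : 0 < R) (hN : exp R * R = n + 1) :
    E n = n ! * exp (exp R) * R⁻¹ ^ (n + 1) /
      (2 * π * exp 1 * √(exp R * (1 + 1 / R) / (2 * π))) := by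
  have hsqrt : √(2 * π * (n + 1) * (R + 1)) = 2 * π * R * √(exp R * (1 + 1 / R) / (2 * π)) := by
    have hsq : 2 * π * (n + 1) * (R + 1) =
        (2 * π * R) ^ 2 * (exp R * (1 + 1 / R) / (2 * π)) := by
      rw [← hN]
      field_simp
    rw [hsq, sqrt_mul (by positivity), sqrt_sq (by positivity)]
  rw [E, ← hR, hsqrt, exp_sub, inv_pow, pow_succ]
  field_simp

theorem Bell_div_E_eq_integral_saddleIntegrand (hR : R = lambertW (n + 1)) (hpos : 0 < R)
    (hn : 1 ≤ n) (hN : exp R * R = n + 1) :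
    (Bell n : ℝ) / E n =
      √(exp R * (1 + 1 / R) / (2 * π)) * ∫ y, saddleIntegrand (exp R) R y := by
  rw [Bell_eq_integral_saddleIntegrand hpos hn hN, E_eq hR hpos hN]
  field_simp

end SaddlePoint

/-! ### Moments of the Gaussian -/

section GaussianMoments

variable {b : ℝ}

lemma integrable_pow_mul_exp_neg_mul_sq (hb : 0 < b) (m : ℕ) :
    Integrable (fun y : ℝ ↦ y ^ m * exp (-(b * y ^ 2 / 2))) := by
  have hm : (-1 : ℝ) < m := by linarith [(m.cast_nonneg : (0 : ℝ) ≤ m)]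
  have h := integrable_rpow_mul_exp_neg_mul_sq (half_pos hb) hm
  simpa only [rpow_natCast, neg_mul, div_mul_eq_mul_div] using h

lemma integral_pow_add_two_mul_exp_neg_mul_sq (hb : 0 < b) (m : ℕ) :
    b * ∫ y : ℝ, y ^ (m + 2) * exp (-(b * y ^ 2 / 2)) =
      (m + 1) * ∫ y : ℝ, y ^ m * exp (-(b * y ^ 2 / 2)) := by
  have int_m := (integrable_pow_mul_exp_neg_mul_sq hb m).const_mul ((m : ℝ) + 1)
  have int_add_two := (integrable_pow_mul_exp_neg_mul_sq hb (m + 2)).const_mul b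
  have deriv (y : ℝ) : HasDerivAt (fun y : ℝ ↦ y ^ (m + 1) * exp (-(b * y ^ 2 / 2)))
      ((m + 1) * (y ^ m * exp (-(b * y ^ 2 / 2)))
        - b * (y ^ (m + 2) * exp (-(b * y ^ 2 / 2)))) y := by
    convert! (hasDerivAt_pow (m + 1) y).mul
      (((hasDerivAt_pow 2 y).const_mul b).div_const 2).neg.exp using 1
    simp only [Pi.neg_apply, Nat.cast_add, Nat.cast_one, Nat.cast_ofNat, Nat.add_sub_cancel]
    ring
  have by_parts := integral_eq_zero_of_hasDerivAt_of_integrable deriv (int_m.sub int_add_two)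
    (integrable_pow_mul_exp_neg_mul_sq hb (m + 1))
  rw [integral_sub int_m int_add_two, integral_const_mul, integral_const_mul] at by_parts
  linarith

theorem sqrt_mul_integral_pow_mul_exp_neg_mul_sq (hb : 0 < b) (k : ℕ) :
    √(b / (2 * π)) * ∫ y : ℝ, y ^ (2 * k) * exp (-(b * y ^ 2 / 2)) =
      (2 * k - 1 : ℕ)‼ / b ^ k := by
  induction k with
  | zero =>
    have h := integral_gaussian (b / 2)
    simp only [neg_mul, div_mul_eq_mul_div] at h
    simp only [mul_zero, pow_zero, one_mul, h, ← sqrt_mul (show 0 ≤ b / (2 * π) by positivity)]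
    rw [show b / (2 * π) * (π / (b / 2)) = 1 by field_simp]
    simp
  | succ k ih =>
    have step := integral_pow_add_two_mul_exp_neg_mul_sq hb (2 * k)
    have hfact : ((2 * (k + 1) - 1 : ℕ)‼ : ℝ) = (2 * k + 1) * (2 * k - 1 : ℕ)‼ := by
      rcases k with _ | k
      · simp
      · exact_mod_cast Nat.doubleFactorial_add_two (2 * k + 1)
    rw [hfact, pow_succ, ← div_div _ (b ^ k), mul_div_assoc, ← ih, eq_div_iff hb.ne', mul_add,
      mul_one]
    push_cast at step
    linear_combination √(b / (2 * π)) * step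

end GaussianMoments

/-! ### Taylor bounds for the phase -/

lemma le_of_deriv_le {f g : ℝ → ℝ} {a x : ℝ} (hfg : f a ≤ g a)
    (hf : ∀ y, a ≤ y → DifferentiableAt ℝ f y) (hg : ∀ y, a ≤ y → DifferentiableAt ℝ g y)
    (hderiv : ∀ y, a ≤ y → deriv f y ≤ deriv g y) (hx : a ≤ x) : f x ≤ g x := by
  have mono : MonotoneOn (fun y ↦ g y - f y) (Ici a) := by
    refine monotoneOn_of_deriv_nonneg (convex_Ici a)
      (fun y hy ↦ ((hg y hy).sub (hf y hy)).continuousAt.continuousWithinAt)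
      (fun y hy ↦ ((hg y (interior_subset hy)).sub
        (hf y (interior_subset hy))).differentiableWithinAt) fun y hy ↦ ?_
    have hy : a ≤ y := interior_subset hy
    rw [deriv_fun_sub (hg y hy) (hf y hy)]
    linarith [hderiv y hy]
  linarith [mono self_mem_Ici hx hx]

section TaylorBounds

variable {x : ℝ}

lemma cos_le_quartic (x : ℝ) : cos x ≤ 1 - x ^ 2 / 2 + x ^ 4 / 24 := by
  suffices h : ∀ {x : ℝ}, 0 ≤ x → cos x ≤ 1 - x ^ 2 / 2 + x ^ 4 / 24 by
    simpa [Even.pow_abs (show Even 4 by decide)] using h (abs_nonneg x)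
  refine le_of_deriv_le (f := cos) (g := fun x ↦ 1 - x ^ 2 / 2 + x ^ 4 / 24) (by simp)
    (by fun_prop) (by fun_prop) fun y hy ↦ ?_
  simp (disch := fun_prop) only [deriv_cos', deriv_fun_add, deriv_fun_sub, deriv_const',
    deriv_div_const, deriv_fun_pow, Nat.cast_ofNat, Nat.add_one_sub_one, pow_one, deriv_id'',
    mul_one]
  linarith [sin_ge_sub_cube hy]

lemma sin_le_quintic (hx : 0 ≤ x) : sin x ≤ x - x ^ 3 / 6 + x ^ 5 / 120 := by
  refine le_of_deriv_le (f := sin) (g := fun x ↦ x - x ^ 3 / 6 + x ^ 5 / 120) (by simp)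
    (by fun_prop) (by fun_prop) (fun y _ ↦ ?_) hx
  simp (disch := fun_prop) only [Real.deriv_sin, deriv_fun_add, deriv_fun_sub, deriv_id'',
    deriv_div_const, deriv_fun_pow, Nat.cast_ofNat, Nat.add_one_sub_one, mul_one]
  linarith [cos_le_quartic y]

lemma sextic_le_cos (x : ℝ) : 1 - x ^ 2 / 2 + x ^ 4 / 24 - x ^ 6 / 720 ≤ cos x := by
  suffices h : ∀ {x : ℝ}, 0 ≤ x → 1 - x ^ 2 / 2 + x ^ 4 / 24 - x ^ 6 / 720 ≤ cos x by
    simpa [Even.pow_abs (show Even 4 by decide), Even.pow_abs (show Even 6 by decide)]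
      using h (abs_nonneg x)
  refine le_of_deriv_le (f := fun x ↦ 1 - x ^ 2 / 2 + x ^ 4 / 24 - x ^ 6 / 720) (by simp)
    (by fun_prop) (by fun_prop) fun y hy ↦ ?_
  simp (disch := fun_prop) only [deriv_cos', deriv_fun_add, deriv_fun_sub, deriv_const',
    deriv_div_const, deriv_fun_pow, Nat.cast_ofNat, Nat.add_one_sub_one, pow_one, deriv_id'',
    mul_one]
  linarith [sin_le_quintic hy]

lemma arctan_le_self (hx : 0 ≤ x) : arctan x ≤ x := by
  refine le_of_deriv_le (f := arctan) (g := fun x ↦ x) (by simp)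
    (fun y _ ↦ differentiableAt_arctan y) (by fun_prop) (fun y _ ↦ ?_) hx
  rw [Real.deriv_arctan, deriv_id'', div_le_one (by positivity)]
  linarith [sq_nonneg y]

lemma cubic_le_arctan (hx : 0 ≤ x) : x - x ^ 3 / 3 ≤ arctan x := by
  refine le_of_deriv_le (f := fun x ↦ x - x ^ 3 / 3) (g := arctan) (by simp)
    (by fun_prop) (fun y _ ↦ differentiableAt_arctan y) (fun y _ ↦ ?_) hx
  rw [Real.deriv_arctan, le_div_iff₀ (by positivity)]
  simp (disch := fun_prop) only [deriv_fun_sub, deriv_id'', deriv_div_const, deriv_fun_pow,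
    Nat.cast_ofNat, Nat.add_one_sub_one, mul_one]
  nlinarith [sq_nonneg (y ^ 2)]

lemma arctan_le_quintic (hx : 0 ≤ x) : arctan x ≤ x - x ^ 3 / 3 + x ^ 5 / 5 := by
  refine le_of_deriv_le (f := arctan) (g := fun x ↦ x - x ^ 3 / 3 + x ^ 5 / 5) (by simp)
    (fun y _ ↦ differentiableAt_arctan y) (by fun_prop) (fun y _ ↦ ?_) hx
  rw [Real.deriv_arctan, div_le_iff₀ (by positivity)]
  simp (disch := fun_prop) only [deriv_fun_add, deriv_fun_sub, deriv_id'', deriv_div_const,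
    deriv_fun_pow, Nat.cast_ofNat, Nat.add_one_sub_one, mul_one]
  nlinarith [sq_nonneg (y ^ 3)]

lemma quadratic_le_log_one_add (hx : 0 ≤ x) : x - x ^ 2 / 2 ≤ log (1 + x) := by
  refine le_trans ?_ (le_log_one_add_of_nonneg hx)
  rw [le_div_iff₀ (by positivity)]
  linarith [pow_nonneg hx 3]

lemma log_one_add_le_cubic (hx : 0 ≤ x) : log (1 + x) ≤ x - x ^ 2 / 2 + x ^ 3 / 3 := by
  refine le_of_deriv_le (f := fun x ↦ log (1 + x)) (g := fun x ↦ x - x ^ 2 / 2 + x ^ 3 / 3)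
    (by simp) (fun y hy ↦ by fun_prop (disch := positivity)) (by fun_prop) (fun y hy ↦ ?_) hx
  rw [deriv_comp_const_add, deriv_log, inv_le_iff_one_le_mul₀ (by positivity)]
  simp (disch := fun_prop) only [deriv_fun_add, deriv_fun_sub, deriv_id'', deriv_div_const,
    deriv_fun_pow, Nat.cast_ofNat, Nat.add_one_sub_one, pow_one, mul_one]
  nlinarith [pow_nonneg hy 3]

end TaylorBounds

section PhaseBounds

variable {R y : ℝ}

/-- The cubic Taylor coefficient of `phaseIm R` at `0`, up to sign. -/
noncomputable def cubicCoeff (R : ℝ) : ℝ := 1 / 6 - (1 / R) ^ 2 / 3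

/-- The quartic Taylor coefficient of `phaseRe R` at `0`. -/
noncomputable def quarticCoeff (R : ℝ) : ℝ := 1 / 24 + (1 / R) ^ 3 / 4

/-- The sextic Taylor coefficient of `phaseRe R` at `0`, up to sign. -/
noncomputable def sexticCoeff (R : ℝ) : ℝ := 1 / 720 + (1 / R) ^ 5 / 6

lemma quarticCoeff_pos (hR : 0 < R) : 0 < quarticCoeff R := by
  unfold quarticCoeff
  positivity

lemma sexticCoeff_pos (hR : 0 < R) : 0 < sexticCoeff R := by
  unfold sexticCoeff
  positivity

lemma phaseRe_nonneg (hR : 0 < R) (y : ℝ) : 0 ≤ phaseRe R y := by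
  have hcos := one_sub_sq_div_two_le_cos (x := y)
  have hlog : 0 ≤ (y / R) ^ 2 - log (1 + (y / R) ^ 2) := by
    linarith [log_le_sub_one_of_pos (show 0 < 1 + (y / R) ^ 2 by positivity)]
  unfold phaseRe
  nlinarith

lemma phaseRe_le (hR : 0 < R) (y : ℝ) : phaseRe R y ≤ quarticCoeff R * y ^ 4 := by
  have hlog := quadratic_le_log_one_add (sq_nonneg (y / R))
  calc phaseRe R y ≤ y ^ 4 / 24 + R / 2 * (((y / R) ^ 2) ^ 2 / 2) := by
        unfold phaseRe
        gcongr
        · linarith [cos_le_quartic y]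
        · linarith
    _ = quarticCoeff R * y ^ 4 := by
        unfold quarticCoeff
        field_simp
        ring

lemma le_phaseRe (hR : 0 < R) (y : ℝ) :
    quarticCoeff R * y ^ 4 - sexticCoeff R * y ^ 6 ≤ phaseRe R y := by
  have hlog := log_one_add_le_cubic (sq_nonneg (y / R))
  calc quarticCoeff R * y ^ 4 - sexticCoeff R * y ^ 6
      = (y ^ 4 / 24 - y ^ 6 / 720) + R / 2 * (((y / R) ^ 2) ^ 2 / 2 - ((y / R) ^ 2) ^ 3 / 3) := by
        unfold quarticCoeff sexticCoeff
        field_simp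
        ring
    _ ≤ phaseRe R y := by
        unfold phaseRe
        refine add_le_add (by linarith [sextic_le_cos y]) ?_
        exact mul_le_mul_of_nonneg_left (by linarith) (by positivity)

lemma phaseIm_neg (R y : ℝ) : phaseIm R (-y) = -phaseIm R y := by
  rw [phaseIm, phaseIm, sin_neg, neg_div, arctan_neg]
  ring

lemma sq_phaseIm_abs (R y : ℝ) : phaseIm R |y| ^ 2 = phaseIm R y ^ 2 := by
  rcases abs_choice y with h | h <;> simp [h, phaseIm_neg]

lemma abs_phaseIm_le (hR : 0 < R) (hR2 : 2 ≤ R ^ 2) (hy : 0 ≤ y) : |phaseIm R y| ≤ y ^ 3 / 6 := by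
  have arctan_lower := mul_le_mul_of_nonneg_left (cubic_le_arctan (div_nonneg hy hR.le)) hR.le
  have arctan_upper := mul_le_mul_of_nonneg_left (arctan_le_self (div_nonneg hy hR.le)) hR.le
  have cubic_eq : R * (y / R - (y / R) ^ 3 / 3) = y - y ^ 3 / (3 * R ^ 2) := by field_simp
  have cubic_le : y ^ 3 / (3 * R ^ 2) ≤ y ^ 3 / 6 := by gcongr; linarith
  rw [cubic_eq] at arctan_lower
  rw [mul_div_cancel₀ _ hR.ne'] at arctan_upper
  rw [phaseIm, abs_le]
  constructor <;> linarith [sin_ge_sub_cube hy, sin_le hy]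

lemma abs_phaseIm_add_cubic_le (hR : 0 < R) (hR4 : 20 ≤ R ^ 4) (hy : 0 ≤ y) :
    |phaseIm R y + cubicCoeff R * y ^ 3| ≤ y ^ 5 / 100 := by
  have arctan_lower := mul_le_mul_of_nonneg_left (cubic_le_arctan (div_nonneg hy hR.le)) hR.le
  have arctan_upper := mul_le_mul_of_nonneg_left (arctan_le_quintic (div_nonneg hy hR.le)) hR.le
  have cubic_eq : R * (y / R - (y / R) ^ 3 / 3) = y - (1 / R) ^ 2 / 3 * y ^ 3 := by field_simp
  have quintic_le : y ^ 5 / (5 * R ^ 4) ≤ y ^ 5 / 100 := by gcongr; linarith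
  have quintic_eq : R * (y / R - (y / R) ^ 3 / 3 + (y / R) ^ 5 / 5) =
      y - (1 / R) ^ 2 / 3 * y ^ 3 + y ^ 5 / (5 * R ^ 4) := by field_simp
  rw [cubic_eq] at arctan_lower
  rw [quintic_eq] at arctan_upper
  rw [phaseIm, cubicCoeff, abs_le]
  constructor <;> linarith [sin_ge_sub_cube hy, sin_le_quintic hy, pow_nonneg hy 5]

lemma sq_phaseIm_le (hR : 0 < R) (hR2 : 2 ≤ R ^ 2) (y : ℝ) : phaseIm R y ^ 2 ≤ y ^ 6 / 36 := by
  have h := pow_le_pow_left₀ (abs_nonneg _) (abs_phaseIm_le hR hR2 (abs_nonneg y)) 2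
  rw [sq_abs, sq_phaseIm_abs] at h
  calc phaseIm R y ^ 2 ≤ (|y| ^ 3 / 6) ^ 2 := h
    _ = |y| ^ 6 / 36 := by ring
    _ = y ^ 6 / 36 := by rw [Even.pow_abs (by decide)]

lemma abs_cubicCoeff_le (hR2 : 2 ≤ R ^ 2) : |cubicCoeff R| ≤ 1 / 6 := by
  have hinv : (1 / R) ^ 2 ≤ 1 / 2 := by
    rw [one_div_pow]
    gcongr
  rw [cubicCoeff, abs_le]
  constructor <;> linarith [sq_nonneg (1 / R)]

lemma abs_sq_phaseIm_sub_le (hR : 0 < R) (hR4 : 20 ≤ R ^ 4) (y : ℝ) :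
    |phaseIm R y ^ 2 - cubicCoeff R ^ 2 * y ^ 6| ≤ y ^ 8 / 300 := by
  suffices h : ∀ {y : ℝ}, 0 ≤ y → |phaseIm R y ^ 2 - cubicCoeff R ^ 2 * y ^ 6| ≤ y ^ 8 / 300 by
    simpa only [sq_phaseIm_abs, Even.pow_abs (show Even 6 by decide),
      Even.pow_abs (show Even 8 by decide)] using h (abs_nonneg y)
  intro y hy
  have hR2 : 2 ≤ R ^ 2 := by nlinarith
  have sub_le : |phaseIm R y - cubicCoeff R * y ^ 3| ≤ y ^ 3 / 6 + 1 / 6 * y ^ 3 := by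
    refine (abs_sub _ _).trans (add_le_add (abs_phaseIm_le hR hR2 hy) ?_)
    rw [abs_mul, abs_of_nonneg (pow_nonneg hy 3)]
    exact mul_le_mul_of_nonneg_right (abs_cubicCoeff_le hR2) (pow_nonneg hy 3)
  calc |phaseIm R y ^ 2 - cubicCoeff R ^ 2 * y ^ 6|
      = |phaseIm R y + cubicCoeff R * y ^ 3| * |phaseIm R y - cubicCoeff R * y ^ 3| := by
        rw [← abs_mul]
        congr 1
        ring
    _ ≤ y ^ 5 / 100 * (y ^ 3 / 6 + 1 / 6 * y ^ 3) := by
        gcongr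
        exact abs_phaseIm_add_cubic_le hR hR4 hy
    _ = y ^ 8 / 300 := by ring

end PhaseBounds

/-! ### Pointwise comparison with the Gaussian -/

lemma exp_sub_one_sub_le {s : ℝ} (hs : 0 ≤ s) : exp s - 1 - s ≤ s ^ 2 / 2 * exp s := by
  refine le_of_deriv_le (f := fun s ↦ exp s - 1 - s) (g := fun s ↦ s ^ 2 / 2 * exp s) (by simp)
    (by fun_prop) (by fun_prop) (fun x _ ↦ ?_) hs
  have hexp : (1 - x) * exp x ≤ 1 := by
    rw [← le_div_iff₀ (exp_pos x), one_div, ← exp_neg]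
    exact one_sub_le_exp_neg x
  simp (disch := fun_prop) only [deriv_fun_sub, deriv_fun_mul, Real.deriv_exp, deriv_const',
    deriv_id'', deriv_div_const, deriv_fun_pow, Nat.cast_ofNat, Nat.add_one_sub_one, pow_one,
    mul_one, sub_zero]
  nlinarith [mul_nonneg (sq_nonneg x) (exp_pos x).le]

lemma abs_exp_mul_cos_sub_le {s : ℝ} (hs : 0 ≤ s) (x : ℝ) :
    |exp s * cos x - (1 + s - x ^ 2 / 2)| ≤
      (exp s - 1 - s) + (s * (x ^ 2 / 2) + x ^ 4 / 24) := by
  have hexp : 0 ≤ exp s - 1 - s := by linarith [add_one_le_exp s]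
  have cos_ge := one_sub_sq_div_two_le_cos (x := x)
  have cos_sub_one : |cos x - 1| ≤ x ^ 2 / 2 := by
    rw [abs_le]
    constructor <;> linarith [cos_le_one x, sq_nonneg x]
  have cos_sub_quadratic : |cos x - 1 + x ^ 2 / 2| ≤ x ^ 4 / 24 := by
    rw [abs_of_nonneg (by linarith)]
    linarith [cos_le_quartic x]
  calc |exp s * cos x - (1 + s - x ^ 2 / 2)|
      = |(exp s - 1 - s) * cos x + (s * (cos x - 1) + (cos x - 1 + x ^ 2 / 2))| := by
        congr 1
        ring
    _ ≤ |exp s - 1 - s| * |cos x| + (|s| * |cos x - 1| + |cos x - 1 + x ^ 2 / 2|) := by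
        rw [← abs_mul, ← abs_mul]
        exact (abs_add_le _ _).trans (add_le_add_right (abs_add_le _ _) _)
    _ ≤ (exp s - 1 - s) * 1 + (s * (x ^ 2 / 2) + x ^ 4 / 24) := by
        rw [abs_of_nonneg hexp, abs_of_nonneg hs]
        gcongr
        exact abs_cos_le_one x
    _ = (exp s - 1 - s) + (s * (x ^ 2 / 2) + x ^ 4 / 24) := by rw [mul_one]

section Tail

variable {t R y : ℝ}

/-- The rate at which the integrand decays beyond the Cauchy weight `(1 + (y / R) ^ 2)⁻¹` at
points with `a ≤ y ^ 2` and `cos y ≤ 1 - c`. -/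
noncomputable def tailDecay (t R a c : ℝ) : ℝ := t * c + (t * R - 2) * a / (2 * R ^ 2 + a)

/-- The factor in front of the Cauchy weight in the bound for the integrand on `2 ≤ y ^ 2`. Its two
terms come from `π ≤ |y|` and from `√2 ≤ |y| ≤ π`. -/
noncomputable def tailFactor (t R : ℝ) : ℝ :=
  exp (-tailDecay t R (π ^ 2) 0) + exp (-tailDecay t R 2 (5 / 6))

lemma tailFactor_pos (t R : ℝ) : 0 < tailFactor t R := by
  unfold tailFactor
  positivity

lemma le_log_one_add_div_sq {a : ℝ} (hR : 0 < R) (ha : 0 ≤ a) (hay : a ≤ y ^ 2) :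
    2 * a / (2 * R ^ 2 + a) ≤ log (1 + (y / R) ^ 2) := by
  calc 2 * a / (2 * R ^ 2 + a) = 2 * (a / R ^ 2) / (a / R ^ 2 + 2) := by
        field_simp
        ring
    _ ≤ log (1 + a / R ^ 2) := le_log_one_add_of_nonneg (by positivity)
    _ ≤ log (1 + (y / R) ^ 2) := by
        rw [div_pow]
        gcongr

lemma exp_mul_exp_phaseRe_le_of_cos_le {a c : ℝ} (hR : 0 < R) (ht : 0 ≤ t) (htR : 2 ≤ t * R)
    (ha : 0 ≤ a) (hay : a ≤ y ^ 2) (hcos : cos y ≤ 1 - c) :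
    exp (-(t * (1 + 1 / R) * y ^ 2 / 2)) * exp (t * phaseRe R y) ≤
      exp (-tailDecay t R a c) * (1 + (y / R) ^ 2)⁻¹ := by
  have hpos : 0 < 1 + (y / R) ^ 2 := by positivity
  have exponent_eq : -(t * (1 + 1 / R) * y ^ 2 / 2) + t * phaseRe R y =
      t * (cos y - 1) - (t * R - 2) / 2 * log (1 + (y / R) ^ 2) - log (1 + (y / R) ^ 2) := by
    unfold phaseRe
    field_simp
    ring
  have log_part := mul_le_mul_of_nonneg_left (le_log_one_add_div_sq hR ha hay)
    (show 0 ≤ (t * R - 2) / 2 by linarith)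
  have cos_part := mul_le_mul_of_nonneg_left hcos ht
  have decay_eq : tailDecay t R a c = t * c + (t * R - 2) / 2 * (2 * a / (2 * R ^ 2 + a)) := by
    unfold tailDecay
    ring
  rw [← exp_log (inv_pos.2 hpos), log_inv, ← exp_add, ← exp_add, exponent_eq, exp_le_exp, decay_eq]
  linarith

lemma cos_le_one_sixth (hy : 2 ≤ y ^ 2) (hyπ : |y| ≤ π) : cos y ≤ 1 - 5 / 6 := by
  have sqrt_le : √2 ≤ |y| := by
    rw [← sqrt_sq_eq_abs]
    exact sqrt_le_sqrt hy
  have hsq : √2 ^ 2 = 2 := sq_sqrt (by norm_num)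
  calc cos y = cos |y| := (cos_abs y).symm
    _ ≤ cos √2 := cos_le_cos_of_nonneg_of_le_pi (sqrt_nonneg 2) hyπ sqrt_le
    _ ≤ 1 - √2 ^ 2 / 2 + (√2 ^ 2) ^ 2 / 24 := by linarith [cos_le_quartic √2]
    _ = 1 - 5 / 6 := by
        rw [hsq]
        norm_num

lemma exp_mul_exp_phaseRe_le (hR : 0 < R) (ht : 0 ≤ t) (htR : 2 ≤ t * R) (hy : 2 ≤ y ^ 2) :
    exp (-(t * (1 + 1 / R) * y ^ 2 / 2)) * exp (t * phaseRe R y) ≤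
      tailFactor t R * (1 + (y / R) ^ 2)⁻¹ := by
  have weight_nonneg : 0 ≤ (1 + (y / R) ^ 2)⁻¹ := by positivity
  rcases le_total π |y| with hπy | hyπ
  · have hπ : π ^ 2 ≤ y ^ 2 := by
      rw [← sq_abs y]
      gcongr
    refine (exp_mul_exp_phaseRe_le_of_cos_le (c := 0) hR ht htR (sq_nonneg π) hπ
      (by linarith [cos_le_one y])).trans (mul_le_mul_of_nonneg_right ?_ weight_nonneg)
    exact le_add_of_nonneg_right (exp_pos _).le
  · refine (exp_mul_exp_phaseRe_le_of_cos_le hR ht htR zero_le_two hy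
      (cos_le_one_sixth hy hyπ)).trans (mul_le_mul_of_nonneg_right ?_ weight_nonneg)
    exact le_add_of_nonneg_left (exp_pos _).le

end Tail

section Comparison

variable {t R : ℝ}

/-- The curvature that remains after `phaseRe R y ≤ 2 * quarticCoeff R * y ^ 2`, valid on
`y ^ 2 ≤ 2`, has been absorbed into the Gaussian. -/
noncomputable def reducedCurvature (R : ℝ) : ℝ := 1 + 1 / R - 4 * quarticCoeff R

lemma exp_mul_exp_phaseRe_le_exp_reducedCurvature {y : ℝ} (hR : 0 < R) (ht : 0 ≤ t)
    (hy : y ^ 2 ≤ 2) :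
    exp (-(t * (1 + 1 / R) * y ^ 2 / 2)) * exp (t * phaseRe R y) ≤
      exp (-(t * reducedCurvature R * y ^ 2 / 2)) := by
  have hc := quarticCoeff_pos hR
  have hphase : t * phaseRe R y ≤ t * (quarticCoeff R * (2 * y ^ 2)) := by
    gcongr
    refine (phaseRe_le hR y).trans ?_
    gcongr
    nlinarith [sq_nonneg y]
  rw [← exp_add, exp_le_exp, reducedCurvature]
  linarith

lemma exp_mul_exp_phaseRe_sub_le (hR : 0 < R) (ht : 0 ≤ t) (htR : 2 ≤ t * R) (y : ℝ) :
    exp (-(t * (1 + 1 / R) * y ^ 2 / 2)) * (exp (t * phaseRe R y) - 1 - t * phaseRe R y) ≤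
      t ^ 2 * quarticCoeff R ^ 2 / 2 * (y ^ 8 * exp (-(t * reducedCurvature R * y ^ 2 / 2))) +
        tailFactor t R * (1 + (y / R) ^ 2)⁻¹ := by
  have hA : 0 ≤ phaseRe R y := phaseRe_nonneg hR y
  have hs : 0 ≤ t * phaseRe R y := mul_nonneg ht hA
  have hK := tailFactor_pos t R
  rcases le_total 2 (y ^ 2) with hy | hy
  · calc _ ≤ exp (-(t * (1 + 1 / R) * y ^ 2 / 2)) * exp (t * phaseRe R y) := by
          gcongr
          linarith
      _ ≤ tailFactor t R * (1 + (y / R) ^ 2)⁻¹ := exp_mul_exp_phaseRe_le hR ht htR hy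
      _ ≤ _ := le_add_of_nonneg_left (by positivity)
  · calc _ ≤ exp (-(t * (1 + 1 / R) * y ^ 2 / 2)) *
            ((t * phaseRe R y) ^ 2 / 2 * exp (t * phaseRe R y)) := by
          gcongr
          exact exp_sub_one_sub_le hs
      _ = (t * phaseRe R y) ^ 2 / 2 *
            (exp (-(t * (1 + 1 / R) * y ^ 2 / 2)) * exp (t * phaseRe R y)) := by ring
      _ ≤ (t * (quarticCoeff R * y ^ 4)) ^ 2 / 2 *
            exp (-(t * reducedCurvature R * y ^ 2 / 2)) := by
          gcongr
          · exact phaseRe_le hR y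
          · exact exp_mul_exp_phaseRe_le_exp_reducedCurvature hR ht hy
      _ = t ^ 2 * quarticCoeff R ^ 2 / 2 *
            (y ^ 8 * exp (-(t * reducedCurvature R * y ^ 2 / 2))) := by ring
      _ ≤ _ := le_add_of_nonneg_right (by positivity)

lemma abs_exp_mul_cos_phase_sub_le (hR : 0 < R) (hR4 : 20 ≤ R ^ 4) (ht : 0 ≤ t) (y : ℝ) :
    |exp (t * phaseRe R y) * cos (t * phaseIm R y) -
        (1 + t * quarticCoeff R * y ^ 4 - t ^ 2 * cubicCoeff R ^ 2 / 2 * y ^ 6)| ≤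
      (exp (t * phaseRe R y) - 1 - t * phaseRe R y) +
        (t ^ 3 * quarticCoeff R / 72 * y ^ 10 + t ^ 4 / 31104 * y ^ 12 +
          t * sexticCoeff R * y ^ 6 + t ^ 2 / 600 * y ^ 8) := by
  set A := phaseRe R y
  set B := phaseIm R y
  have hA : 0 ≤ A := phaseRe_nonneg hR y
  have hB : B ^ 2 ≤ y ^ 6 / 36 := sq_phaseIm_le hR (by nlinarith) y
  have hc := quarticCoeff_pos hR
  have taylor := abs_exp_mul_cos_sub_le (mul_nonneg ht hA) (t * B)
  have mixed_le : t * A * ((t * B) ^ 2 / 2) ≤ t ^ 3 * quarticCoeff R / 72 * y ^ 10 :=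
    calc t * A * ((t * B) ^ 2 / 2) = t ^ 3 / 2 * (A * B ^ 2) := by ring
      _ ≤ t ^ 3 / 2 * (quarticCoeff R * y ^ 4 * (y ^ 6 / 36)) := by
        gcongr
        exact phaseRe_le hR y
      _ = _ := by ring
  have quartic_le : (t * B) ^ 4 / 24 ≤ t ^ 4 / 31104 * y ^ 12 :=
    calc (t * B) ^ 4 / 24 = t ^ 4 / 24 * (B ^ 2) ^ 2 := by ring
      _ ≤ t ^ 4 / 24 * (y ^ 6 / 36) ^ 2 := by gcongr
      _ = _ := by ring
  have phaseRe_lower := mul_le_mul_of_nonneg_left (le_phaseRe hR y) ht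
  have phaseRe_upper := mul_le_mul_of_nonneg_left (phaseRe_le hR y) ht
  have sextic_nonneg : 0 ≤ t * (sexticCoeff R * y ^ 6) := by
    have := sexticCoeff_pos hR
    positivity
  obtain ⟨phaseIm_lower, phaseIm_upper⟩ := abs_le.1 (abs_sq_phaseIm_sub_le hR hR4 y)
  have phaseIm_lower := mul_le_mul_of_nonneg_left phaseIm_lower (show 0 ≤ t ^ 2 / 2 by positivity)
  have phaseIm_upper := mul_le_mul_of_nonneg_left phaseIm_upper (show 0 ≤ t ^ 2 / 2 by positivity)
  rw [abs_le] at taylor ⊢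
  constructor <;> linarith [taylor.1, taylor.2]

lemma abs_saddleIntegrand_sub_le (hR : 0 < R) (hR4 : 20 ≤ R ^ 4) (ht : 0 ≤ t) (htR : 2 ≤ t * R)
    (y : ℝ) :
    |saddleIntegrand t R y - exp (-(t * (1 + 1 / R) * y ^ 2 / 2)) *
        (1 + t * quarticCoeff R * y ^ 4 - t ^ 2 * cubicCoeff R ^ 2 / 2 * y ^ 6)| ≤
      exp (-(t * (1 + 1 / R) * y ^ 2 / 2)) *
          (t ^ 3 * quarticCoeff R / 72 * y ^ 10 + t ^ 4 / 31104 * y ^ 12 +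
            t * sexticCoeff R * y ^ 6 + t ^ 2 / 600 * y ^ 8) +
        (t ^ 2 * quarticCoeff R ^ 2 / 2 * (y ^ 8 * exp (-(t * reducedCurvature R * y ^ 2 / 2))) +
          tailFactor t R * (1 + (y / R) ^ 2)⁻¹) := by
  have pointwise := mul_le_mul_of_nonneg_left (abs_exp_mul_cos_phase_sub_le hR hR4 ht y)
    (exp_pos (-(t * (1 + 1 / R) * y ^ 2 / 2))).le
  rw [saddleIntegrand, ← mul_sub, abs_mul, abs_of_pos (exp_pos _)]
  linarith [exp_mul_exp_phaseRe_sub_le hR ht htR y]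

end Comparison

/-! ### Integrated comparison with the Gaussian -/

/-- `f` is integrable over `ℝ` and its integral multiplied by `c` is `m`. With the normalization `c`
of a Gaussian density this expresses moments, and it keeps integrability and value together. -/
def HasScaledIntegral (c : ℝ) (f : ℝ → ℝ) (m : ℝ) : Prop :=
  Integrable f ∧ c * ∫ y, f y = m

namespace HasScaledIntegral

variable {b c m₁ m₂ : ℝ} {f g : ℝ → ℝ}

lemma add (hf : HasScaledIntegral c f m₁) (hg : HasScaledIntegral c g m₂) :
    HasScaledIntegral c (fun y ↦ f y + g y) (m₁ + m₂) :=
  ⟨hf.1.add hg.1, by rw [integral_add hf.1 hg.1, mul_add, hf.2, hg.2]⟩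

lemma sub (hf : HasScaledIntegral c f m₁) (hg : HasScaledIntegral c g m₂) :
    HasScaledIntegral c (fun y ↦ f y - g y) (m₁ - m₂) :=
  ⟨hf.1.sub hg.1, by rw [integral_sub hf.1 hg.1, mul_sub, hf.2, hg.2]⟩

lemma const_mul (a : ℝ) (hf : HasScaledIntegral c f m₁) :
    HasScaledIntegral c (fun y ↦ a * f y) (a * m₁) :=
  ⟨hf.1.const_mul a, by rw [integral_const_mul, mul_left_comm, hf.2]⟩

lemma abs_sub_le {h : ℝ → ℝ} {e : ℝ} (hf : HasScaledIntegral c f m₁) (hc : 0 ≤ c)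
    (hg : HasScaledIntegral c g m₂) (hh : HasScaledIntegral c h e)
    (hle : ∀ y, |f y - g y| ≤ h y) : |m₁ - m₂| ≤ e := by
  rw [← (hf.sub hg).2, abs_mul, abs_of_nonneg hc, ← hh.2]
  gcongr
  exact abs_integral_le_integral_abs.trans (integral_mono (hf.sub hg).1.abs hh.1 hle)

lemma pow_mul_exp {b' : ℝ} (hb : 0 ≤ b) (hb' : 0 < b') (k : ℕ) :
    HasScaledIntegral √(b / (2 * π)) (fun y ↦ y ^ (2 * k) * exp (-(b' * y ^ 2 / 2)))
      (√(b / b') * ((2 * k - 1 : ℕ)‼ / b' ^ k)) := by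
  refine ⟨integrable_pow_mul_exp_neg_mul_sq hb' _, ?_⟩
  rw [← sqrt_mul_integral_pow_mul_exp_neg_mul_sq hb', ← mul_assoc, ← sqrt_mul (by positivity)]
  congr 2
  field_simp

lemma exp_mul_pow (hb : 0 < b) (k : ℕ) :
    HasScaledIntegral √(b / (2 * π)) (fun y ↦ exp (-(b * y ^ 2 / 2)) * y ^ (2 * k))
      ((2 * k - 1 : ℕ)‼ / b ^ k) := by
  simpa only [div_self hb.ne', sqrt_one, one_mul, mul_one, mul_comm] using pow_mul_exp hb.le hb k

lemma inv_one_add_div_sq {R : ℝ} (hR : 0 < R) (c : ℝ) :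
    HasScaledIntegral c (fun y ↦ (1 + (y / R) ^ 2)⁻¹) (c * (π * R)) := by
  refine ⟨integrable_inv_one_add_sq.comp_div hR.ne', ?_⟩
  rw [Measure.integral_comp_div (fun y : ℝ ↦ (1 + y ^ 2)⁻¹) R, integral_univ_inv_one_add_sq,
    abs_of_pos hR, smul_eq_mul, mul_comm R]

lemma exp_mul_quartic_sub_sextic (hb : 0 < b) (p q : ℝ) :
    HasScaledIntegral √(b / (2 * π))
      (fun y ↦ exp (-(b * y ^ 2 / 2)) * (1 + p * y ^ 4 - q * y ^ 6))
      (1 + p * (3 / b ^ 2) - q * (15 / b ^ 3)) := by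
  convert! ((exp_mul_pow hb 0).add ((exp_mul_pow hb 2).const_mul p)).sub
    ((exp_mul_pow hb 3).const_mul q) using 1
  · ext y
    ring
  · norm_num [Nat.doubleFactorial]

lemma exp_mul_error_polynomial (hb : 0 < b) (p q r s : ℝ) :
    HasScaledIntegral √(b / (2 * π))
      (fun y ↦ exp (-(b * y ^ 2 / 2)) * (p * y ^ 10 + q * y ^ 12 + r * y ^ 6 + s * y ^ 8))
      (p * (945 / b ^ 5) + q * (10395 / b ^ 6) + r * (15 / b ^ 3) + s * (105 / b ^ 4)) := by
  convert! ((((exp_mul_pow hb 5).const_mul p).add ((exp_mul_pow hb 6).const_mul q)).add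
    ((exp_mul_pow hb 3).const_mul r)).add ((exp_mul_pow hb 4).const_mul s) using 1
  ext y
  ring

end HasScaledIntegral

section SaddleError

variable {t R m : ℝ}

/-- The Gaussian integral of the error terms in `abs_saddleIntegrand_sub_le`. -/
noncomputable def saddleError (t R : ℝ) : ℝ :=
  (t ^ 3 * quarticCoeff R / 72 * (945 / (t * (1 + 1 / R)) ^ 5) +
      t ^ 4 / 31104 * (10395 / (t * (1 + 1 / R)) ^ 6) +
      t * sexticCoeff R * (15 / (t * (1 + 1 / R)) ^ 3) +
      t ^ 2 / 600 * (105 / (t * (1 + 1 / R)) ^ 4)) +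
    (t ^ 2 * quarticCoeff R ^ 2 / 2 *
        (√(t * (1 + 1 / R) / (t * reducedCurvature R)) * (105 / (t * reducedCurvature R) ^ 4)) +
      tailFactor t R * (√(t * (1 + 1 / R) / (2 * π)) * (π * R)))

theorem abs_sub_le_saddleError (hR : 0 < R) (hR4 : 20 ≤ R ^ 4) (ht : 0 < t) (htR : 2 ≤ t * R)
    (hcurv : 0 < reducedCurvature R)
    (hm : HasScaledIntegral √(t * (1 + 1 / R) / (2 * π)) (saddleIntegrand t R) m) :
    |m - (1 + t * quarticCoeff R * (3 / (t * (1 + 1 / R)) ^ 2) -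
        t ^ 2 * cubicCoeff R ^ 2 / 2 * (15 / (t * (1 + 1 / R)) ^ 3))| ≤ saddleError t R := by
  have hb : 0 < t * (1 + 1 / R) := by positivity
  have reduced_moment : HasScaledIntegral √(t * (1 + 1 / R) / (2 * π))
      (fun y ↦ y ^ 8 * exp (-(t * reducedCurvature R * y ^ 2 / 2)))
      (√(t * (1 + 1 / R) / (t * reducedCurvature R)) * (105 / (t * reducedCurvature R) ^ 4)) := by
    exact_mod_cast HasScaledIntegral.pow_mul_exp hb.le (mul_pos ht hcurv) 4
  exact hm.abs_sub_le (sqrt_nonneg _) (.exp_mul_quartic_sub_sextic hb _ _)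
    ((HasScaledIntegral.exp_mul_error_polynomial hb _ _ _ _).add
      ((reduced_moment.const_mul _).add ((HasScaledIntegral.inv_one_add_div_sq hR _).const_mul _)))
    (abs_saddleIntegrand_sub_le hR hR4 ht.le htR)

end SaddleError

/-! ### The error for `11 / 5 ≤ R` -/

section LargeR

variable {t R : ℝ}

lemma mul_quadratic_le_exp (hR : 11 / 5 ≤ R) :
    9.01 * (1 + (R - 11 / 5) + (R - 11 / 5) ^ 2 / 2) ≤ exp R := by
  have hexp_two : 7.389 ≤ exp 1 ^ 2 := by nlinarith [exp_one_gt_d9]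
  calc 9.01 * (1 + (R - 11 / 5) + (R - 11 / 5) ^ 2 / 2)
      ≤ 7.389 * (1 + 1 / 5 + (1 / 5) ^ 2 / 2) *
          (1 + (R - 11 / 5) + (R - 11 / 5) ^ 2 / 2) := by
        gcongr ?_ * _
        norm_num
    _ ≤ exp 1 ^ 2 * exp (1 / 5) * exp (R - 11 / 5) := by
        gcongr
        · exact quadratic_le_exp_of_nonneg (by norm_num)
        · exact quadratic_le_exp_of_nonneg (by linarith)
    _ = exp R := by
        rw [← exp_nat_mul, ← exp_add, ← exp_add]
        congr 1
        push_cast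
        ring

lemma tailDecay_pi_sq_ge (hR : 11 / 5 ≤ R)
    (ht : 9.01 * (1 + (R - 11 / 5) + (R - 11 / 5) ^ 2 / 2) ≤ t) :
    3 * R + 2 ≤ tailDecay t R (π ^ 2) 0 := by
  obtain ⟨h, rfl⟩ : ∃ h, R = 11 / 5 + h := ⟨R - 11 / 5, by ring⟩
  have hh : 0 ≤ h := by linarith
  rw [add_sub_cancel_left] at ht
  have hπ : 9.8596 ≤ π ^ 2 := by nlinarith [pi_gt_d2]
  have htR := mul_le_mul_of_nonneg_right ht (by positivity : 0 ≤ 11 / 5 + h)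
  have htR_ge : 3 * (11 / 5 + h) + 2 ≤ t * (11 / 5 + h) - 2 := by
    nlinarith [pow_nonneg hh 2, pow_nonneg hh 3]
  have numeric : (3 * (11 / 5 + h) + 2) * (2 * (11 / 5 + h) ^ 2 + 9.8596) ≤
      (t * (11 / 5 + h) - 2) * 9.8596 := by
    nlinarith [pow_nonneg hh 2, pow_nonneg hh 3]
  rw [tailDecay, mul_zero, zero_add, le_div_iff₀ (by positivity)]
  nlinarith

lemma tailDecay_two_ge (hR : 11 / 5 ≤ R)
    (ht : 9.01 * (1 + (R - 11 / 5) + (R - 11 / 5) ^ 2 / 2) ≤ t) :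
    3 * R + 3 ≤ tailDecay t R 2 (5 / 6) := by
  obtain ⟨h, rfl⟩ : ∃ h, R = 11 / 5 + h := ⟨R - 11 / 5, by ring⟩
  have hh : 0 ≤ h := by linarith
  rw [add_sub_cancel_left] at ht
  have ht_mul := mul_le_mul_of_nonneg_right ht
    (by positivity : 0 ≤ (11 / 5 + h) + 5 / 6 * ((11 / 5 + h) ^ 2 + 1))
  rw [tailDecay, ← sub_le_iff_le_add', le_div_iff₀ (by positivity)]
  nlinarith [pow_nonneg hh 2, pow_nonneg hh 3, pow_nonneg hh 4]

lemma tailFactor_exp_le (hR : 11 / 5 ≤ R) : tailFactor (exp R) R ≤ 0.186 / exp R ^ 3 := by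
  have ht := mul_quadratic_le_exp hR
  have inv_cube : exp (-(3 * R)) = 1 / exp R ^ 3 := by
    rw [exp_neg, ← exp_nat_mul, one_div, Nat.cast_ofNat]
  have numeric : exp (-2) + exp (-3) ≤ 0.186 := by
    rw [show (-2 : ℝ) = (2 : ℕ) * -1 by norm_num, show (-3 : ℝ) = (3 : ℕ) * -1 by norm_num,
      exp_nat_mul, exp_nat_mul]
    calc exp (-1) ^ 2 + exp (-1) ^ 3 ≤ 0.3679 ^ 2 + 0.3679 ^ 3 := by
          gcongr <;> linarith [exp_neg_one_lt_d9]
      _ ≤ 0.186 := by norm_num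
  calc tailFactor (exp R) R ≤ exp (-(3 * R) + -2) + exp (-(3 * R) + -3) := by
        unfold tailFactor
        gcongr
        · linarith [tailDecay_pi_sq_ge hR ht]
        · linarith [tailDecay_two_ge hR ht]
    _ = (exp (-2) + exp (-3)) / exp R ^ 3 := by
        rw [exp_add, exp_add, inv_cube]
        ring
    _ ≤ 0.186 / exp R ^ 3 := by gcongr

lemma sqrt_mul_pi_mul_le (hR : 11 / 5 ≤ R) :
    √(exp R * (1 + 1 / R) / (2 * π)) * (π * R) ≤ 1.2535 * exp R := by
  have : 0 < R := by linarith
  have hsq : R ^ 2 + R ≤ exp R := by nlinarith [mul_quadratic_le_exp hR]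
  rw [← le_div_iff₀ (by positivity), sqrt_le_left (by positivity), div_pow,
    le_div_iff₀ (by positivity)]
  calc exp R * (1 + 1 / R) / (2 * π) * (π * R) ^ 2 = exp R * (R ^ 2 + R) * (π / 2) := by field_simp
    _ ≤ exp R * exp R * 1.2535 ^ 2 := by
        gcongr
        linarith [pi_lt_d4]
    _ = (1.2535 * exp R) ^ 2 := by ring

lemma tail_error_le (hR : 11 / 5 ≤ R) :
    tailFactor (exp R) R * (√(exp R * (1 + 1 / R) / (2 * π)) * (π * R)) ≤ 0.235 / exp R ^ 2 := by
  have : 0 < R := by linarith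
  calc _ ≤ 0.186 / exp R ^ 3 * (1.2535 * exp R) :=
        mul_le_mul (tailFactor_exp_le hR) (sqrt_mul_pi_mul_le hR) (by positivity) (by positivity)
    _ = 0.186 * 1.2535 / exp R ^ 2 := by field_simp
    _ ≤ 0.235 / exp R ^ 2 := by
        gcongr
        norm_num

lemma one_div_le_of_le (hR : 11 / 5 ≤ R) : 1 / R ≤ 5 / 11 := by
  simpa using one_div_le_one_div_of_le (by norm_num) hR

lemma one_div_pow_three_le (hR : 11 / 5 ≤ R) : (1 / R) ^ 3 ≤ 25 / 121 * (1 / R) := by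
  have hu := one_div_le_of_le hR
  have hu0 : 0 ≤ 1 / R := one_div_nonneg.2 (by linarith)
  nlinarith [mul_nonneg hu0 (sub_nonneg.2 hu), mul_nonneg (sq_nonneg (1 / R)) (sub_nonneg.2 hu)]

lemma mixed_error_le (hR : 11 / 5 ≤ R) (ht : 0 < t) :
    t ^ 3 * quarticCoeff R / 72 * (945 / (t * (1 + 1 / R)) ^ 5) ≤ 0.547 / t ^ 2 := by
  have hu0 : 0 < 1 / R := one_div_pos.2 (by linarith)
  have hu3 := one_div_pow_three_le hR
  rw [quarticCoeff]
  set u := 1 / R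
  have ratio_le : (1 + 6 * u ^ 3) / (1 + u) ^ 5 ≤ 1 := by
    rw [div_le_one (by positivity)]
    have bernoulli := one_add_mul_le_pow (show -2 ≤ u by linarith) 5
    push_cast at bernoulli
    linarith
  calc t ^ 3 * (1 / 24 + u ^ 3 / 4) / 72 * (945 / (t * (1 + u)) ^ 5)
      = 945 / 1728 * ((1 + 6 * u ^ 3) / (1 + u) ^ 5) / t ^ 2 := by
        field_simp
        ring
    _ ≤ 945 / 1728 * 1 / t ^ 2 := by gcongr
    _ ≤ 0.547 / t ^ 2 := by
        gcongr
        norm_num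

lemma le_mul_one_add_one_div (hR : 0 < R) (ht : 0 < t) : t ≤ t * (1 + 1 / R) :=
  le_mul_of_one_le_right ht.le (by linarith [one_div_pos.2 hR])

lemma cos_error_le (hR : 0 < R) (ht : 0 < t) :
    t ^ 4 / 31104 * (10395 / (t * (1 + 1 / R)) ^ 6) ≤ 0.335 / t ^ 2 := by
  calc t ^ 4 / 31104 * (10395 / (t * (1 + 1 / R)) ^ 6)
      ≤ t ^ 4 / 31104 * (10395 / t ^ 6) := by
        gcongr
        exact le_mul_one_add_one_div hR ht
    _ = 10395 / 31104 / t ^ 2 := by field_simp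
    _ ≤ 0.335 / t ^ 2 := by
        gcongr
        norm_num

lemma phaseIm_error_le (hR : 0 < R) (ht : 0 < t) :
    t ^ 2 / 600 * (105 / (t * (1 + 1 / R)) ^ 4) ≤ 0.175 / t ^ 2 := by
  calc t ^ 2 / 600 * (105 / (t * (1 + 1 / R)) ^ 4) ≤ t ^ 2 / 600 * (105 / t ^ 4) := by
        gcongr
        exact le_mul_one_add_one_div hR ht
    _ = 105 / 600 / t ^ 2 := by field_simp
    _ = 0.175 / t ^ 2 := by norm_num

lemma phaseRe_error_le (hR : 11 / 5 ≤ R) (ht : 0 < t) :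
    t * sexticCoeff R * (15 / (t * (1 + 1 / R)) ^ 3) ≤ 0.03 / t ^ 2 := by
  have hu0 : 0 < 1 / R := one_div_pos.2 (by linarith)
  have hu := one_div_le_of_le hR
  rw [sexticCoeff]
  set u := 1 / R
  calc t * (1 / 720 + u ^ 5 / 6) * (15 / (t * (1 + u)) ^ 3)
      = 15 * (1 / 720 + u ^ 5 / 6) / (1 + u) ^ 3 / t ^ 2 := by field_simp
    _ ≤ 0.03 / t ^ 2 := by
        gcongr
        rw [div_le_iff₀ (by positivity)]
        have hu5 : u ^ 5 ≤ (5 / 11) ^ 3 * u ^ 2 := by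
          rw [show u ^ 5 = u ^ 3 * u ^ 2 by ring]
          gcongr
        nlinarith

lemma reducedCurvature_eq (R : ℝ) : reducedCurvature R = 5 / 6 + (1 / R - (1 / R) ^ 3) := by
  unfold reducedCurvature quarticCoeff
  ring

lemma five_sixths_le_reducedCurvature (hR : 11 / 5 ≤ R) : 5 / 6 ≤ reducedCurvature R := by
  have hu0 : 0 < 1 / R := one_div_pos.2 (by linarith)
  rw [reducedCurvature_eq]
  linarith [one_div_pow_three_le hR]

lemma exp_error_le (hR : 11 / 5 ≤ R) (ht : 0 < t) :
    t ^ 2 * quarticCoeff R ^ 2 / 2 *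
      (√(t * (1 + 1 / R) / (t * reducedCurvature R)) * (105 / (t * reducedCurvature R) ^ 4)) ≤
      0.216 / t ^ 2 := by
  have hu0 : 0 < 1 / R := one_div_pos.2 (by linarith)
  have hu := one_div_le_of_le hR
  have hu3 := one_div_pow_three_le hR
  have hv0 : 0 < reducedCurvature R := by linarith [five_sixths_le_reducedCurvature hR]
  have hv := reducedCurvature_eq R
  rw [quarticCoeff, mul_div_mul_left _ _ ht.ne']
  set u := 1 / R
  set v := reducedCurvature R
  have sqrt_le : √((1 + u) / v) ≤ 1.119 := by
    rw [sqrt_le_iff, div_le_iff₀ hv0]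
    constructor <;> linarith
  have ratio_le : (1 + 6 * u ^ 3) / v ^ 2 ≤ 1.449 := by
    rw [div_le_iff₀ (by positivity)]
    nlinarith [sq_nonneg (u - u ^ 3)]
  calc t ^ 2 * (1 / 24 + u ^ 3 / 4) ^ 2 / 2 * (√((1 + u) / v) * (105 / (t * v) ^ 4))
      = 105 / 1152 * (√((1 + u) / v) * ((1 + 6 * u ^ 3) / v ^ 2) ^ 2) / t ^ 2 := by
        field_simp
        ring
    _ ≤ 105 / 1152 * (1.119 * 1.449 ^ 2) / t ^ 2 := by gcongr
    _ ≤ 0.216 / t ^ 2 := by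
        gcongr
        norm_num

lemma saddleError_exp_le (hR : 11 / 5 ≤ R) : saddleError (exp R) R ≤ 1.6 / exp R ^ 2 := by
  have hR0 : 0 < R := by linarith
  have ht := exp_pos R
  calc saddleError (exp R) R
      ≤ (0.547 / exp R ^ 2 + 0.335 / exp R ^ 2 + 0.03 / exp R ^ 2 + 0.175 / exp R ^ 2) +
          (0.216 / exp R ^ 2 + 0.235 / exp R ^ 2) := by
        unfold saddleError
        gcongr ?_ + ?_ + ?_ + ?_ + (?_ + ?_)
        exacts [mixed_error_le hR ht, cos_error_le hR0 ht, phaseRe_error_le hR ht,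
          phaseIm_error_le hR0 ht, exp_error_le hR ht, tail_error_le hR]
    _ = 1.538 / exp R ^ 2 := by ring
    _ ≤ 1.6 / exp R ^ 2 := by
        gcongr
        norm_num

end LargeR

/-- The two-term asymptotic approximation to `Bell n / E n` in terms of `R = lambertW (n + 1)`. -/
noncomputable def bellRatioApprox (R : ℝ) : ℝ :=
  1 - exp (-R) / 12 *
    ((1 - 3 / (2 * R) - 10 / R ^ 2 - 9 / R ^ 3 + 1 / R ^ 4) / (1 + 1 / R) ^ 3)

lemma bellRatioApprox_eq {R : ℝ} (hR : 0 < R) :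
    bellRatioApprox R = 1 + exp R * quarticCoeff R * (3 / (exp R * (1 + 1 / R)) ^ 2) -
      exp R ^ 2 * cubicCoeff R ^ 2 / 2 * (15 / (exp R * (1 + 1 / R)) ^ 3) := by
  unfold bellRatioApprox quarticCoeff cubicCoeff
  rw [exp_neg, show 1 + 1 / R = (R + 1) / R by field_simp]
  field_simp
  ring

lemma div_exp_sq_eq (a R : ℝ) : a / exp R ^ 2 = a * exp (-2 * R) := by
  rw [neg_mul, exp_neg, ← exp_nat_mul, Nat.cast_ofNat, div_eq_mul_inv]

theorem abs_Bell_div_E_sub_le_of_le {n : ℕ} (hn : 1 ≤ n) {R : ℝ} (hR : R = lambertW (n + 1))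
    (hN : exp R * R = n + 1) (hR_ge : 11 / 5 ≤ R) :
    |(Bell n : ℝ) / E n - bellRatioApprox R| ≤ 1.6 * exp (-2 * R) := by
  have hR0 : 0 < R := by linarith
  have hR4 : 20 ≤ R ^ 4 := le_trans (by norm_num) (pow_le_pow_left₀ (by norm_num) hR_ge 4)
  have htR : 2 ≤ exp R * R := by
    have : (1 : ℝ) ≤ n := by exact_mod_cast hn
    linarith
  rw [bellRatioApprox_eq hR0, ← div_exp_sq_eq]
  refine (abs_sub_le_saddleError hR0 hR4 (exp_pos R) htR
    (by linarith [five_sixths_le_reducedCurvature hR_ge]) ?_).trans (saddleError_exp_le hR_ge)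
  exact ⟨integrable_saddleIntegrand hR0 hn hN,
    (Bell_div_E_eq_integral_saddleIntegrand hR hR0 hn hN).symm⟩

/-! ### The Lambert function -/

section Lambert

variable {a b x : ℝ}

lemma lambertW_mul_exp (hx : 0 < x) : lambertW x * exp (lambertW x) = x := by
  have exists_root : ∃ y : ℝ, y * exp y = x := by
    have h_ivt := intermediate_value_Icc hx.le
      (f := fun y ↦ y * exp y) (Continuous.continuousOn (by fun_prop))
    have h_le : x ≤ x * exp x := le_mul_of_one_le_right hx.le (one_le_exp hx.le)
    obtain ⟨y, -, hy⟩ := h_ivt ⟨by simpa using hx.le, h_le⟩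
    exact ⟨y, hy⟩
  exact Function.invFun_eq exists_root

lemma lambertW_pos (hx : 0 < x) : 0 < lambertW x :=
  pos_of_mul_pos_left (by rwa [lambertW_mul_exp hx]) (exp_pos _).le

lemma le_of_mul_exp_le_mul_exp (hb : 0 < b) (h : a * exp a ≤ b * exp b) : a ≤ b := by
  by_contra! hba
  exact h.not_gt (by gcongr)

lemma le_lambertW (hx : 0 < x) (h : a * exp a ≤ x) : a ≤ lambertW x :=
  le_of_mul_exp_le_mul_exp (lambertW_pos hx) (by rwa [lambertW_mul_exp hx])

lemma lambertW_le (hx : 0 < x) (hb : 0 < b) (h : x ≤ b * exp b) : lambertW x ≤ b :=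
  le_of_mul_exp_le_mul_exp hb (by rwa [lambertW_mul_exp hx])

end Lambert

/-! ### Numerical verification for `n ≤ 18` -/

section RationalExp

variable {x : ℝ}

/-- A rational lower bound for `exp x` on `[0, ∞)`: the sixteenth power of the Taylor polynomial of
`exp (x / 16)`. -/
noncomputable def expLower (x : ℝ) : ℝ := (∑ i ∈ Finset.range 6, (x / 16) ^ i / i !) ^ 16

/-- A rational upper bound for `exp x` on `[0, 16]`: the Taylor polynomial of `expLower` is
increased by a bound for its remainder. -/
noncomputable def expUpper (x : ℝ) : ℝ :=
  (∑ i ∈ Finset.range 6, (x / 16) ^ i / i ! + (x / 16) ^ 6 * (6 + 1) / (6 ! * 6)) ^ 16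

lemma exp_eq_exp_div_pow (x : ℝ) : exp x = exp (x / 16) ^ 16 := by
  rw [← exp_nat_mul]
  congr 1
  push_cast
  ring

lemma expLower_le_exp (hx : 0 ≤ x) : expLower x ≤ exp x := by
  rw [exp_eq_exp_div_pow, expLower]
  gcongr
  exact sum_le_exp_of_nonneg (by positivity) 6

lemma expLower_pos (hx : 0 ≤ x) : 0 < expLower x := by
  rw [expLower, Finset.sum_range_succ']
  positivity

lemma exp_le_expUpper (hx : 0 ≤ x) (hx' : x ≤ 16) : exp x ≤ expUpper x := by
  rw [exp_eq_exp_div_pow, expUpper]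
  gcongr
  exact_mod_cast exp_bound' (n := 6) (by positivity) (by linarith) (by norm_num)

lemma eleven_fifths_mul_exp_le : 11 / 5 * exp (11 / 5) ≤ 20 :=
  calc 11 / 5 * exp (11 / 5) ≤ 11 / 5 * expUpper (11 / 5) := by
        gcongr
        exact exp_le_expUpper (by norm_num) (by norm_num)
    _ ≤ 20 := by norm_num [expUpper, Finset.sum_range_succ, Nat.factorial]

end RationalExp

section SmallN

/-- The square of `Bell n / E n`, with independent parameters `r`, `p` and `f` in place of
`R = lambertW (n + 1)`, `π` and `exp (exp R - 1)`. -/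
noncomputable def bellRatioSq (n : ℕ) (r p f : ℝ) : ℝ :=
  (Bell n * r ^ n / (n ! * f)) ^ 2 * (2 * p * (n + 1) * (r + 1))

/-- `bellRatioApprox R` with `exp R` replaced by `(n + 1) / R`, and with independent parameters
`a`, `b` in place of `R` where it occurs increasingly, respectively decreasingly. -/
noncomputable def bellRatioApproxOf (n : ℕ) (a b : ℝ) : ℝ :=
  1 + (3 / 2 * a ^ 3 + 10 * a ^ 2 + 9 * a - 1 - b ^ 4) / (12 * (n + 1) * (b + 1) ^ 3)

variable {n : ℕ} {R : ℝ}

lemma exp_eq_div_of_mul_eq (hR : 0 < R) (hN : exp R * R = n + 1) : exp R = (n + 1) / R :=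
  eq_div_of_mul_eq hR.ne' hN

lemma exp_neg_two_mul_eq_sq (hR : 0 < R) (hN : exp R * R = n + 1) :
    exp (-2 * R) = (R / (n + 1)) ^ 2 := by
  rw [← one_mul (exp _), ← div_exp_sq_eq, exp_eq_div_of_mul_eq hR hN, one_div, ← inv_pow, inv_div]

lemma Bell_div_E_eq_sqrt (hR : R = lambertW (n + 1)) (hpos : 0 < R) (hN : exp R * R = n + 1) :
    (Bell n : ℝ) / E n = √(bellRatioSq n R π (exp ((n + 1) / R - 1))) := by
  rw [bellRatioSq, sqrt_mul (sq_nonneg _), sqrt_sq (by positivity), E, ← hR,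
    exp_eq_div_of_mul_eq hpos hN]
  field_simp

lemma bellRatioApprox_eq_bellRatioApproxOf (hR : 0 < R) (hN : exp R * R = n + 1) :
    bellRatioApprox R = bellRatioApproxOf n R R := by
  rw [bellRatioApprox, bellRatioApproxOf, exp_neg, exp_eq_div_of_mul_eq hR hN,
    show 1 + 1 / R = (R + 1) / R by field_simp]
  field_simp
  ring

lemma bellRatioSq_le_bellRatioSq {r r' p p' f f' : ℝ} (hr : 0 ≤ r) (hp : 0 ≤ p) (hf' : 0 < f')
    (hrr : r ≤ r') (hpp : p ≤ p') (hff : f' ≤ f) :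
    bellRatioSq n r p f ≤ bellRatioSq n r' p' f' := by
  have : 0 < f := hf'.trans_le hff
  have : 0 ≤ r' := hr.trans hrr
  have : 0 ≤ p' := hp.trans hpp
  unfold bellRatioSq
  gcongr

lemma bellRatioApproxOf_le_bellRatioApproxOf {a a' b b' : ℝ} (ha : 0 ≤ a) (hb' : 0 ≤ b')
    (haa : a ≤ a') (hbb : b' ≤ b) (h : 0 ≤ 3 / 2 * a ^ 3 + 10 * a ^ 2 + 9 * a - 1 - b ^ 4) :
    bellRatioApproxOf n a b ≤ bellRatioApproxOf n a' b' := by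
  have numerator_le : 3 / 2 * a ^ 3 + 10 * a ^ 2 + 9 * a - 1 - b ^ 4 ≤
      3 / 2 * a' ^ 3 + 10 * a' ^ 2 + 9 * a' - 1 - b' ^ 4 := by gcongr
  have := h.trans numerator_le
  unfold bellRatioApproxOf
  gcongr

/-- Inequalities between rational numbers which imply that `lo ≤ lambertW (n + 1) ≤ hi` and that
`Bell n / E n` is within `1.6 * exp (-2 * R)` of `bellRatioApprox R` for `R = lambertW (n + 1)`. -/
structure IsCertificate (n : ℕ) (lo hi : ℝ) : Prop where
  pos : 0 < lo
  le : lo ≤ hi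
  lo_le : lo ≤ 16
  hi_le : hi ≤ (n : ℝ) + 1
  div_lo_le : (n + 1) / lo - 1 ≤ 16
  lo_mul_expUpper_le : lo * expUpper lo ≤ n + 1
  le_hi_mul_expLower : n + 1 ≤ hi * expLower hi
  numerator_nonneg : 0 ≤ 3 / 2 * lo ^ 3 + 10 * lo ^ 2 + 9 * lo - 1 - hi ^ 4
  bellRatioSq_le : bellRatioSq n hi 3.1416 (expLower ((n + 1) / hi - 1)) ≤
    (bellRatioApproxOf n lo hi + 1.6 * (lo / (n + 1)) ^ 2) ^ 2
  le_bellRatioSq : (bellRatioApproxOf n hi lo - 1.6 * (lo / (n + 1)) ^ 2) ^ 2 ≤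
    bellRatioSq n lo 3.1415 (expUpper ((n + 1) / lo - 1))

namespace IsCertificate

variable {lo hi : ℝ}

lemma lambertW_mem_Icc (h : IsCertificate n lo hi) : lambertW (n + 1) ∈ Icc lo hi := by
  have := h.pos
  have hhi : 0 < hi := h.pos.trans_le h.le
  refine ⟨le_lambertW (by positivity) (le_trans ?_ h.lo_mul_expUpper_le),
    lambertW_le (by positivity) hhi (h.le_hi_mul_expLower.trans ?_)⟩ <;> gcongr
  · exact exp_le_expUpper h.pos.le h.lo_le
  · exact expLower_le_exp hhi.le

lemma div_sub_one_nonneg (h : IsCertificate n lo hi) (hR : R ∈ Icc lo hi) :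
    0 ≤ (n + 1) / R - 1 := by
  rw [sub_nonneg, one_le_div₀ (h.pos.trans_le hR.1)]
  exact hR.2.trans h.hi_le

lemma sqrt_bellRatioSq_le (h : IsCertificate n lo hi) (hR : R ∈ Icc lo hi) :
    √(bellRatioSq n R π (exp ((n + 1) / R - 1))) ≤
      bellRatioApproxOf n lo hi + 1.6 * (lo / (n + 1)) ^ 2 := by
  have hR0 : 0 < R := h.pos.trans_le hR.1
  have hhi : 0 < hi := h.pos.trans_le h.le
  have hexp := h.div_sub_one_nonneg (right_mem_Icc.2 h.le)
  have one_le : 1 ≤ bellRatioApproxOf n lo hi :=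
    le_add_of_nonneg_right (div_nonneg h.numerator_nonneg (by positivity))
  refine sqrt_le_iff.2 ⟨by positivity, le_trans ?_ h.bellRatioSq_le⟩
  refine bellRatioSq_le_bellRatioSq hR0.le pi_pos.le (expLower_pos hexp) hR.2 pi_lt_d4.le
    ((expLower_le_exp hexp).trans ?_)
  gcongr
  exact hR.2

lemma le_sqrt_bellRatioSq (h : IsCertificate n lo hi) (hR : R ∈ Icc lo hi) :
    bellRatioApproxOf n hi lo - 1.6 * (lo / (n + 1)) ^ 2 ≤
      √(bellRatioSq n R π (exp ((n + 1) / R - 1))) := by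
  have hexp := h.div_sub_one_nonneg (left_mem_Icc.2 h.le)
  refine le_sqrt_of_sq_le (h.le_bellRatioSq.trans ?_)
  refine bellRatioSq_le_bellRatioSq h.pos.le (by norm_num) (exp_pos _) hR.1 pi_gt_d4.le
    (le_trans ?_ (exp_le_expUpper hexp h.div_lo_le))
  have := h.pos
  gcongr
  exact hR.1

theorem abs_Bell_div_E_sub_le (h : IsCertificate n lo hi) (hR : R = lambertW (n + 1))
    (hN : exp R * R = n + 1) :
    |(Bell n : ℝ) / E n - bellRatioApprox R| ≤ 1.6 * exp (-2 * R) := by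
  have hmem : R ∈ Icc lo hi := hR ▸ h.lambertW_mem_Icc
  have hlo := h.pos
  have hR0 : 0 < R := hlo.trans_le hmem.1
  have approx_ge : bellRatioApproxOf n lo hi ≤ bellRatioApproxOf n R R :=
    bellRatioApproxOf_le_bellRatioApproxOf hlo.le hR0.le hmem.1 hmem.2 h.numerator_nonneg
  have approx_le : bellRatioApproxOf n R R ≤ bellRatioApproxOf n hi lo := by
    refine bellRatioApproxOf_le_bellRatioApproxOf hR0.le hlo.le hmem.2 hmem.1
      (h.numerator_nonneg.trans ?_)
    obtain ⟨hlo_le, hle_hi⟩ := hmem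
    gcongr
  have error_ge : 1.6 * (lo / (n + 1)) ^ 2 ≤ 1.6 * (R / (n + 1)) ^ 2 := by
    gcongr
    exact hmem.1
  rw [Bell_div_E_eq_sqrt hR hR0 hN, bellRatioApprox_eq_bellRatioApproxOf hR0 hN,
    exp_neg_two_mul_eq_sq hR0 hN, abs_le]
  constructor
  · linarith [h.le_sqrt_bellRatioSq hmem]
  · linarith [h.sqrt_bellRatioSq_le hmem]

end IsCertificate

/-- The Bell numbers up to `Bell 18`. -/
def bellTable : List ℕ :=
  [1, 1, 2, 5, 15, 52, 203, 877, 4140, 21147, 115975, 678570, 4213597, 27644437, 190899322,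
    1382958545, 10480142147, 82864869804, 682076806159]

lemma Bell_eq_bellTable_getD {n : ℕ} (hn : n < bellTable.length) :
    Bell n = bellTable.getD n 0 := by
  have recurrence : ∀ m < 18, ∑ k ∈ Finset.range (m + 1), m.choose k * bellTable.getD k 0 =
      bellTable.getD (m + 1) 0 := by decide +kernel
  induction n using Nat.strong_induction_on with
  | _ n ih =>
    rcases n with _ | n
    · simp [Bell, bellTable]
    · rw [Bell_succ, ← recurrence n (Nat.succ_lt_succ_iff.1 hn)]
      refine Finset.sum_congr rfl fun k hk ↦ ?_
      have hkn := Finset.mem_range.1 hk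
      rw [ih k hkn (hkn.trans hn)]

/-- The values of `lambertW (n + 1)` for `1 ≤ n ≤ 18`, truncated to four decimals. -/
noncomputable def lambertWTable : List ℝ :=
  [0.8526, 1.0499, 1.2021, 1.3267, 1.4324, 1.5243, 1.6058, 1.6790, 1.7455, 1.8065, 1.8628,
    1.9151, 1.9640, 2.0099, 2.0531, 2.0940, 2.1328, 2.1698]

theorem isCertificate_lambertWTable {n : ℕ} (hn : 1 ≤ n) (hn' : n ≤ 18) :
    IsCertificate n (lambertWTable.getD (n - 1) 0) (lambertWTable.getD (n - 1) 0 + 0.0001) := by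
  have Bell_eq := Bell_eq_bellTable_getD (Nat.lt_succ_iff.2 hn')
  interval_cases n <;>
    simp only [bellTable, lambertWTable, List.getD_cons_succ, List.getD_cons_zero, Nat.reduceSub]
      at Bell_eq ⊢ <;>
    constructor <;>
    norm_num [expLower, expUpper, bellRatioSq, bellRatioApproxOf, Bell_eq, Finset.sum_range_succ,
      Nat.factorial]

end SmallN

theorem stmt_0 (n : ℕ) (hn : 1 ≤ n) (R : ℝ) (hR : R = lambertW (n + 1)) :
    |(Bell n : ℝ) / E n -
        (1 - (Real.exp (-R) / 12) *
          ((1 - 3 / (2 * R) - 10 / R ^ 2 - 9 / R ^ 3 + 1 / R ^ 4) / (1 + 1 / R) ^ 3))| ≤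
      1.6 * Real.exp (-2 * R) := by
  change |(Bell n : ℝ) / E n - bellRatioApprox R| ≤ 1.6 * exp (-2 * R)
  have hN : exp R * R = n + 1 := by
    rw [hR, mul_comm]
    exact lambertW_mul_exp (by positivity)
  rcases Nat.lt_or_ge 18 n with n_large | n_small
  · have R_ge : 11 / 5 ≤ R := hR ▸ le_lambertW (by positivity)
      (eleven_fifths_mul_exp_le.trans (by exact_mod_cast Nat.succ_le_succ n_large))
    exact abs_Bell_div_E_sub_le_of_le hn hR hN R_ge
  · exact (isCertificate_lambertWTable hn n_small).abs_Bell_div_E_sub_le hR hN
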